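/- Let d ≥ 1 be an integer and let G^d be the directed multigraph on the same vertex set V obtained by replacing every edge of G by d parallel copies (so G^d is strongly connected and its edge multiplicities satisfy A_{G^d}(v,w) = d·A(v,w)). Then, in ℤ[y], B(G^d,s;y) = B(G,s;y^d) · (1 + y + ⋯ + y^{d−1})^{|V|−1}. -/

import Mathlib

open Finset Polynomial

namespace SandpileBM

variable {V E : Type} [Fintype V] [DecidableEq V] [Fintype E] [DecidableEq E]

/-- The number of edges from `v` to `w` in the multigraph given by `src`, `tgt`. -/
def numEdges (src tgt : E → V) (v w : V) : ℕ :=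
  (Finset.univ.filter fun e => src e = v ∧ tgt e = w).card

/-- The out-degree of a vertex. -/
def outdeg (src : E → V) (v : V) : ℕ :=
  (Finset.univ.filter fun e => src e = v).card

/-- The in-degree of a vertex. -/
def indeg (tgt : E → V) (v : V) : ℕ :=
  (Finset.univ.filter fun e => tgt e = v).card

/-- The digraph is strongly connected: any vertex is reachable from any other by
a directed path. -/
def StronglyConnected (src tgt : E → V) : Prop :=
  ∀ v w : V, Relation.ReflTransGen (fun a b => ∃ e : E, src e = a ∧ tgt e = b) v w

/-- Result of firing the vertex `v` on the chip configuration `c` (sinkless model). -/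
def fire (src tgt : E → V) (c : V → ℕ) (v : V) : V → ℕ :=
  fun w => c w + numEdges src tgt v w - (if w = v then outdeg src v else 0)

/-- One legal firing move in the sinkless model. -/
def FireStep (src tgt : E → V) (c d : V → ℕ) : Prop :=
  ∃ v : V, outdeg src v ≤ c v ∧ d = fire src tgt c v

/-- `Reach c d`: `d` is obtained from `c` by a finite sequence of legal firing moves. -/
def Reach (src tgt : E → V) : (V → ℕ) → (V → ℕ) → Prop :=
  Relation.ReflTransGen (FireStep src tgt)

/-- Stability of a chip configuration. -/
def Stable (src : E → V) (c : V → ℕ) : Prop :=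
  ∀ v : V, c v < outdeg src v

/-- A chip configuration is recurrent if it is not stable and every configuration
accessible from it can reach it back. -/
def Recurrent (src tgt : E → V) (c : V → ℕ) : Prop :=
  ¬ Stable src c ∧ ∀ d : V → ℕ, Reach src tgt c d → Reach src tgt d c

/-- Level (total number of chips) of a chip configuration. -/
def lvl (c : V → ℕ) : ℕ := ∑ v : V, c v

/-- Indicator function of the vertex `s`. -/
def deltaS (s : V) : V → ℕ := fun v => if v = s then 1 else 0

/-- Result of firing the vertex `v` on an `s`-configuration. -/
def sfire (src tgt : E → V) (s : V) (c : {v : V // v ≠ s} → ℕ) (v : {v : V // v ≠ s}) :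
    {v : V // v ≠ s} → ℕ :=
  fun w => c w + numEdges src tgt v.1 w.1 - (if w = v then outdeg src v.1 else 0)

/-- One legal s-firing move. -/
def SFireStep (src tgt : E → V) (s : V) (c d : {v : V // v ≠ s} → ℕ) : Prop :=
  ∃ v : {v : V // v ≠ s}, outdeg src v.1 ≤ c v ∧ d = sfire src tgt s c v

/-- `SReach c d`: `d` is obtained from `c` by a finite sequence of legal s-firing moves. -/
def SReach (src tgt : E → V) (s : V) :
    ({v : V // v ≠ s} → ℕ) → ({v : V // v ≠ s} → ℕ) → Prop :=
  Relation.ReflTransGen (SFireStep src tgt s)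

/-- Stability of an `s`-configuration. -/
def SStable (src : E → V) (s : V) (c : {v : V // v ≠ s} → ℕ) : Prop :=
  ∀ v : {v : V // v ≠ s}, c v < outdeg src v.1

/-- The stabilization `c°` of an `s`-configuration: the (for strongly connected digraphs,
unique) stable `s`-configuration reachable from `c` by legal s-firing moves. -/
noncomputable def stab (src tgt : E → V) (s : V) (c : {v : V // v ≠ s} → ℕ) :
    {v : V // v ≠ s} → ℕ :=
  Classical.epsilon fun d => SReach src tgt s c d ∧ SStable src s d

/-- An `s`-configuration `c` is s-recurrent if every `s`-configuration can be completed
to one whose stabilization is `c`. -/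
def SRecurrent (src tgt : E → V) (s : V) (c : {v : V // v ≠ s} → ℕ) : Prop :=
  ∀ c₁ : {v : V // v ≠ s} → ℕ, ∃ c₂ : {v : V // v ≠ s} → ℕ,
    stab src tgt s (c₁ + c₂) = c

/-- `β_s`, recording the number of edges from `s` to each other vertex. -/
def betaS (src tgt : E → V) (s : V) : {v : V // v ≠ s} → ℕ :=
  fun v => numEdges src tgt s v.1

/-- The relation `~_s` on s-recurrent configurations: `d = (c + k·β_s)°` for some `k`. -/
def SEquiv (src tgt : E → V) (s : V) (c d : {v : V // v ≠ s} → ℕ) : Prop :=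
  ∃ k : ℕ, stab src tgt s (c + k • betaS src tgt s) = d

/-- Restriction of a chip configuration to `V ∖ {s}`. -/
def restrictS (s : V) (c : V → ℕ) : {v : V // v ≠ s} → ℕ := fun v => c v.1

/-- Extension `c̄` of an `s`-configuration by `0` at `s`. -/
def extendS (s : V) (c : {v : V // v ≠ s} → ℕ) : V → ℕ :=
  fun v => if h : v = s then 0 else c ⟨v, h⟩

/-- The s-index `χ(c)`: the least `k` such that `c̄ + k·δ_s` is recurrent. -/
noncomputable def sIndex (src tgt : E → V) (s : V) (c : {v : V // v ≠ s} → ℕ) : ℕ :=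
  sInf {k : ℕ | Recurrent src tgt (extendS s c + k • deltaS s)}

/-- `φ(c) := c̄ + χ(c)·δ_s`. -/
noncomputable def phi (src tgt : E → V) (s : V) (c : {v : V // v ≠ s} → ℕ) : V → ℕ :=
  extendS s c + sIndex src tgt s c • deltaS s

/-- The s-level `slvl(c) := χ(c) + Σ_{v ≠ s} c(v)`. -/
noncomputable def slvl (src tgt : E → V) (s : V) (c : {v : V // v ≠ s} → ℕ) : ℕ :=
  sIndex src tgt s c + ∑ v : {v : V // v ≠ s}, c v

/-- The d-level `dlvl(c) := deg⁺(s) + Σ_{v ≠ s} c(v)`. -/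
def dlvl (src : E → V) (s : V) (c : {v : V // v ≠ s} → ℕ) : ℕ :=
  outdeg src s + ∑ v : {v : V // v ≠ s}, c v

/-- The set (as a type) of recurrent chip configurations. -/
abbrev RecL (src tgt : E → V) := {c : V → ℕ // Recurrent src tgt c}

/-- The setoid on recurrent configurations generated by the relation `~` (i.e. `⤳`). -/
def recLSetoid (src tgt : E → V) : Setoid (RecL src tgt) :=
  Relation.EqvGen.setoid fun a b => Reach src tgt a.1 b.1

/-- The set of `~`-classes of recurrent configurations. -/
abbrev RecLQuot (src tgt : E → V) := Quotient (recLSetoid src tgt)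

/-- The set (as a type) of s-recurrent configurations. -/
abbrev RecS (src tgt : E → V) (s : V) := {c : {v : V // v ≠ s} → ℕ // SRecurrent src tgt s c}

/-- The setoid on s-recurrent configurations generated by the relation `~_s`. -/
def recSSetoid (src tgt : E → V) (s : V) : Setoid (RecS src tgt s) :=
  Relation.EqvGen.setoid fun a b => SEquiv src tgt s a.1 b.1

/-- The set of `~_s`-classes of s-recurrent configurations. -/
abbrev RecSQuot (src tgt : E → V) (s : V) := Quotient (recSSetoid src tgt s)

/-- The level of a `~`-class of recurrent configurations (level is constant on classes). -/
noncomputable def lvlClass (src tgt : E → V) (q : RecLQuot src tgt) : ℕ :=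
  sSup ((fun c : RecL src tgt => lvl c.1) '' {c | Quotient.mk (recLSetoid src tgt) c = q})

/-- The s-level of a `~_s`-class (s-level is constant on classes). -/
noncomputable def slvlClass (src tgt : E → V) (s : V) (q : RecSQuot src tgt s) : ℕ :=
  sSup ((fun c : RecS src tgt s => slvl src tgt s c.1) ''
    {c | Quotient.mk (recSSetoid src tgt s) c = q})

/-- The d-level of a `~_s`-class: the maximum d-level over the class. -/
noncomputable def dlvlClass (src tgt : E → V) (s : V) (q : RecSQuot src tgt s) : ℕ :=
  sSup ((fun c : RecS src tgt s => dlvl src s c.1) ''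
    {c | Quotient.mk (recSSetoid src tgt s) c = q})

/-- The Biggs–Merino polynomial `B(G,s;y) = Σ_{[c] ∈ Rec(G,s)/~_s} y^{dlvl([c])}`. -/
noncomputable def BM (src tgt : E → V) (s : V) : Polynomial ℤ :=
  ∑ᶠ q : RecSQuot src tgt s, X ^ dlvlClass src tgt s q

/-- `LegalSeq l c d`: firing the vertices in the list `l` in order is a sequence of
legal firing moves transforming `c` into `d` (sinkless model). -/
def LegalSeq (src tgt : E → V) : List V → (V → ℕ) → (V → ℕ) → Prop
  | [], c, d => d = c
  | v :: l, c, d => outdeg src v ≤ c v ∧ LegalSeq src tgt l (fire src tgt c v) d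

/-- `SLegalSeq l c d`: firing the vertices in the list `l` in order is a sequence of
legal s-firing moves transforming `c` into `d`. -/
def SLegalSeq (src tgt : E → V) (s : V) :
    List {v : V // v ≠ s} → ({v : V // v ≠ s} → ℕ) → ({v : V // v ≠ s} → ℕ) → Prop
  | [], c, d => d = c
  | v :: l, c, d => outdeg src v.1 ≤ c v ∧ SLegalSeq src tgt s l (sfire src tgt s c v) d

/-- The configuration obtained from `c` after firing the vertices of `l` in order. -/
def iterFire (src tgt : E → V) (c : V → ℕ) (l : List V) : V → ℕ :=
  l.foldl (fire src tgt) c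

/-- The Laplacian of the digraph applied to an integer vector:
`(Δq)(v) = deg⁺(v)·q(v) − Σ_w A(w,v)·q(w)`. -/
def lapApply (src tgt : E → V) (q : V → ℤ) : V → ℤ :=
  fun v => (outdeg src v : ℤ) * q v - ∑ w : V, (numEdges src tgt w v : ℤ) * q w

/-- `r` is the primitive period vector of the digraph: it has positive entries with
gcd `1`, lies in the kernel of the Laplacian, and generates this kernel. -/
def IsPeriodVector (src tgt : E → V) (r : V → ℕ) : Prop :=
  (∀ v : V, 0 < r v) ∧ Finset.univ.gcd r = 1 ∧
    lapApply src tgt (fun v => (r v : ℤ)) = 0 ∧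
    ∀ q : V → ℤ, lapApply src tgt q = 0 → ∃ k : ℤ, q = k • fun v => (r v : ℤ)

/-- The Laplacian matrix of the digraph. -/
def lapMatrix (src tgt : E → V) : Matrix V V ℤ :=
  Matrix.of fun v w =>
    if v = w then (outdeg src v : ℤ) - numEdges src tgt v v
    else -(numEdges src tgt w v : ℤ)

/-- The determinant of the reduced Laplacian obtained by deleting the row and
column indexed by `v`. -/
def reducedLapDet (src tgt : E → V) (v : V) : ℤ :=
  (((lapMatrix src tgt).submatrix (fun a : {w : V // w ≠ v} => a.1)
    (fun a : {w : V // w ≠ v} => a.1)).det)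

/-- The period constant `α := gcd_{v ∈ V} det Δ_v`. -/
def periodConstant (src tgt : E → V) : ℤ :=
  Finset.univ.gcd (reducedLapDet src tgt)

/-- `IsWalk l a b`: the list of edges `l` forms a directed walk from `a` to `b`. -/
def IsWalk (src tgt : E → V) : List E → V → V → Prop
  | [], a, b => a = b
  | e :: l, a, b => src e = a ∧ IsWalk src tgt l (tgt e) b

/-- `IsPath l a b`: the list of edges `l` forms a directed path from `a` to `b`:
all visited vertices are distinct (except that the final vertex is allowed to
coincide with the starting vertex). -/
def IsPath (src tgt : E → V) (l : List E) (a b : V) : Prop :=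
  IsWalk src tgt l a b ∧ (l.map tgt).Nodup ∧ a ∉ (l.map tgt).dropLast

/-- `T` is an arborescence rooted at `s`: for every vertex `v` there is a unique
directed path from `s` to `v` using only edges of `T`. -/
def IsArborescence (src tgt : E → V) (s : V) (T : Finset E) : Prop :=
  ∀ v : V, ∃! l : List E, (∀ e ∈ l, e ∈ T) ∧ IsPath src tgt l s v

/-- The edge `e ∉ T` is externally active for the arborescence `T` (w.r.t. the linear
order on `E`): where `P₁`, `P₂` are the two edge-disjoint directed paths in `T ∪ {e}`
sharing their starting vertex and ending at `tgt e`, with `e ∈ P₁`, the smallest edge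
on `P₁ ++ P₂` lies on `P₁`. -/
def ExtActive [LinearOrder E] (src tgt : E → V) (T : Finset E) (e : E) : Prop :=
  e ∉ T ∧ ∃ (u : V) (p₁ p₂ : List E),
    (∀ f ∈ p₁, f ∈ T ∨ f = e) ∧ (∀ f ∈ p₂, f ∈ T ∨ f = e) ∧
    IsPath src tgt p₁ u (tgt e) ∧ IsPath src tgt p₂ u (tgt e) ∧
    e ∈ p₁ ∧ (∀ f ∈ p₁, f ∉ p₂) ∧
    ∃ fmin ∈ p₁, ∀ f ∈ p₁ ++ p₂, fmin ≤ f

/-- The external activity `e(T)` of an arborescence `T`. -/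
noncomputable def extActivity [LinearOrder E] (src tgt : E → V) (T : Finset E) : ℕ :=
  Nat.card {e : E // ExtActive src tgt T e}

/-- The greedoid Tutte polynomial `T(G,s;y) = Σ_{T ∈ A(G,s)} y^{e(T)}`. -/
noncomputable def greedoidTutte [LinearOrder E] (src tgt : E → V) (s : V) : Polynomial ℤ :=
  ∑ᶠ T : {T : Finset E // IsArborescence src tgt s T}, X ^ extActivity src tgt T.1

/-- `f` is a `G^r`-parking function rooted at `s`. -/
def IsParking (src tgt : E → V) (s : V) (f : {v : V // v ≠ s} → ℕ) : Prop :=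
  ∀ A : Finset {v : V // v ≠ s}, A.Nonempty →
    ∃ v ∈ A, f v < Nat.card {e : E // (∀ w ∈ A, src e ≠ w.1) ∧ tgt e = v.1}

/-- The d-level of a `G^r`-parking function: `|E| − |V| + 1 − Σ_{v≠s} f(v)`. -/
noncomputable def parkDlvl (src : E → V) (s : V) (f : {v : V // v ≠ s} → ℕ) : ℕ :=
  ((Fintype.card E : ℤ) - Fintype.card V + 1 - ∑ v : {v : V // v ≠ s}, (f v : ℤ)).toNat

/-- `σ` is an s-decreasing traversal: a sequence in which every vertex and edge of `G`
appears exactly once, satisfying (R1) every vertex other than `s` is immediately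
preceded by an edge targeting it, and (R2) every edge is the `<ₑ`-maximum edge not yet
seen whose source has been seen. -/
def IsTraversal [LinearOrder E] (src tgt : E → V) (s : V) (σ : List (V ⊕ E)) : Prop :=
  σ.Nodup ∧ (∀ x : V ⊕ E, x ∈ σ) ∧
  (∀ (i : ℕ) (hi : i < σ.length) (v : V),
      σ.get ⟨i, hi⟩ = Sum.inl v → v ≠ s →
      0 < i ∧ ∃ e : E, tgt e = v ∧ σ.get ⟨i - 1, by omega⟩ = Sum.inr e) ∧
  (∀ (i : ℕ) (hi : i < σ.length) (e : E),
      σ.get ⟨i, hi⟩ = Sum.inr e →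
      Sum.inl (src e) ∈ σ.take i ∧
      ∀ f : E, Sum.inr f ∉ σ.take i → Sum.inl (src f) ∈ σ.take i → f ≤ e)

open scoped Classical in
/-- `Υ(σ)`: the set of edges immediately preceding a non-sink vertex in `σ`. -/
noncomputable def Upsilon (src tgt : E → V) (s : V) (σ : List (V ⊕ E)) : Finset E :=
  Finset.univ.filter fun e =>
    ∃ (i : ℕ) (hi : i < σ.length) (v : V), v ≠ s ∧ σ.get ⟨i, hi⟩ = Sum.inl v ∧
      0 < i ∧ ∃ hj : i - 1 < σ.length, σ.get ⟨i - 1, hj⟩ = Sum.inr e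

/-- The strength of `σ`: the number of strong edges, i.e. edges whose target appears
before them in `σ`. -/
noncomputable def strength (tgt : E → V) (σ : List (V ⊕ E)) : ℕ :=
  Nat.card {e : E // ∃ (i : ℕ) (hi : i < σ.length),
    σ.get ⟨i, hi⟩ = Sum.inr e ∧ Sum.inl (tgt e) ∈ σ.take i}

/-- `Ψ(σ)(v)`: one less than the number of edges targeting `v` that appear before the
vertex `v` in `σ`. -/
def Psi (tgt : E → V) (s : V) (σ : List (V ⊕ E)) : {v : V // v ≠ s} → ℕ :=
  fun v =>
    (((σ.takeWhile fun x => x ≠ Sum.inl v.1).filterMap Sum.getRight?).filter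
      fun e => tgt e = v.1).length - 1

/-!
Divide a configuration of `G^d` by `d` with remainder in every coordinate. All numbers occurring in
a firing on `G^d` are `d` times those on `G`, so firing `v` on `G^d` fires `v` on the quotient and
keeps the remainder, and adding `β_s` on `G^d` adds `β_s` to the quotient. Stabilization, recurrence
and `~_s` are therefore those of the quotient, with the remainder, an arbitrary element of
`{0, …, d - 1}^(V ∖ {s})`, as an additional invariant. Since `dlvl` on `G^d` is `d` times `dlvl` of
the quotient plus the sum of the remainder, summing over the remainders gives the factor
`(1 + y + ⋯ + y^(d - 1))^(|V| - 1)`.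

That stabilizations exist comes from a potential `V → ℕ` which drops, summed over the chips, in
every firing of a vertex other than `s`.
-/

section Rank

open Relation

theorem exists_rank_of_reflTransGen {α : Type*} {r : α → α → Prop} {b : α}
    (h : ∀ a, ReflTransGen r a b) :
    ∃ ρ : α → ℕ, ∀ a ≠ b, ∃ a', r a a' ∧ ρ a' < ρ a := by
  classical
  have hsteps : ∀ a, ∃ n, ((Comp r)^[n] Eq) a b := fun a =>
    (h a).head_induction_on ⟨0, rfl⟩ fun hac _ ⟨n, hn⟩ =>
      ⟨n + 1, by rw [Function.iterate_succ_apply']; exact ⟨_, hac, hn⟩⟩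
  refine ⟨fun a => Nat.find (hsteps a), fun a hab => ?_⟩
  have hspec := Nat.find_spec (hsteps a)
  cases hn : Nat.find (hsteps a) with
  | zero =>
    rw [hn] at hspec
    exact absurd hspec hab
  | succ n =>
    rw [hn, Function.iterate_succ_apply'] at hspec
    obtain ⟨a', haa', ha'⟩ := hspec
    exact ⟨a', haa', (Nat.lt_succ_of_le (Nat.find_min' _ ha')).trans_eq hn.symm⟩

end Rank

section Firing

omit [Fintype V] [DecidableEq E]

/-- The chips that the non-sink vertices receive when `v` fires; `betaS` is the case `v = s`. -/
def sentChips (src tgt : E → V) (s v : V) : {v : V // v ≠ s} → ℕ :=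
  fun w => numEdges src tgt v w.1

variable {src tgt : E → V} {s : V} {a b c c' : {v : V // v ≠ s} → ℕ}

theorem sfire_add_single {v : {v : V // v ≠ s}} (hv : outdeg src v.1 ≤ c v) :
    sfire src tgt s c v + Pi.single v (outdeg src v.1) = c + sentChips src tgt s v.1 := by
  funext w
  obtain rfl | hwv := eq_or_ne w v
  · simp only [sfire, sentChips, Pi.add_apply, Pi.single_eq_same, if_true]
    lia
  · simp [sfire, sentChips, hwv]

theorem sFireStep_iff :
    SFireStep src tgt s c c' ↔ ∃ v : {v : V // v ≠ s}, outdeg src v.1 ≤ c v ∧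
      c' + Pi.single v (outdeg src v.1) = c + sentChips src tgt s v.1 :=
  exists_congr fun _ => and_congr_right fun hv => by
    rw [← sfire_add_single hv, add_left_inj]

theorem SFireStep.diamond (hb : SFireStep src tgt s a b) (hc : SFireStep src tgt s a c) :
    b = c ∨ ∃ e, SFireStep src tgt s b e ∧ SFireStep src tgt s c e := by
  obtain ⟨v, hv, hb⟩ := sFireStep_iff.1 hb
  obtain ⟨w, hw, hc⟩ := sFireStep_iff.1 hc
  obtain rfl | hvw := eq_or_ne v w
  · exact .inl (add_right_cancel (hb.trans hc.symm))
  have hbw : outdeg src w.1 ≤ b w := by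
    have := congrFun hb w
    simp only [Pi.add_apply, Pi.single_eq_of_ne hvw.symm] at this
    lia
  have hcv : outdeg src v.1 ≤ c v := by
    have := congrFun hc v
    simp only [Pi.add_apply, Pi.single_eq_of_ne hvw] at this
    lia
  refine .inr ⟨sfire src tgt s b w, ⟨w, hbw, rfl⟩, sFireStep_iff.2 ⟨v, hcv, ?_⟩⟩
  refine add_right_cancel (b := Pi.single w (outdeg src w.1)) ?_
  rw [add_right_comm, sfire_add_single hbw, add_right_comm, hb, add_right_comm c, hc,
    add_right_comm]

theorem SReach.eq_of_sStable (h : SReach src tgt s a b) (ha : SStable src s a) : a = b := by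
  obtain rfl | ⟨_, ⟨v, hv, -⟩, -⟩ := h.cases_head
  · rfl
  · exact absurd (ha v) hv.not_gt

theorem SReach.eq_of_sStable_of_sStable (ha : SReach src tgt s c a) (hb : SReach src tgt s c b)
    (ha' : SStable src s a) (hb' : SStable src s b) : a = b := by
  have hdiamond : ∀ x y z, SFireStep src tgt s x y → SFireStep src tgt s x z →
      ∃ e, Relation.ReflGen (SFireStep src tgt s) y e ∧ SReach src tgt s z e := by
    intro x y z hy hz
    obtain rfl | ⟨e, hye, hze⟩ := hy.diamond hz
    · exact ⟨y, .refl, .refl⟩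
    · exact ⟨e, .single hye, .single hze⟩
  obtain ⟨e, hae, hbe⟩ := Relation.church_rosser hdiamond ha hb
  exact (SReach.eq_of_sStable hae ha').trans (SReach.eq_of_sStable hbe hb').symm

theorem SReach.stab_eq (h : SReach src tgt s c a) (ha : SStable src s a) :
    stab src tgt s c = a := by
  obtain ⟨hreach, hstable⟩ := Classical.epsilon_spec
    (p := fun a => SReach src tgt s c a ∧ SStable src s a) ⟨a, h, ha⟩
  exact hreach.eq_of_sStable_of_sStable h hstable ha

end Firing

section Stabilization

omit [DecidableEq E]

/-- Every vertex has a directed path to `s`. This is what makes stabilization with sink `s`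
terminate. -/
def IsGlobalSink (src tgt : E → V) (s : V) : Prop :=
  ∀ v : V, Relation.ReflTransGen (fun a b => ∃ e : E, src e = a ∧ tgt e = b) v s

omit [Fintype V] [DecidableEq V] [Fintype E] in
theorem StronglyConnected.isGlobalSink {src tgt : E → V} (hG : StronglyConnected src tgt)
    (s : V) : IsGlobalSink src tgt s :=
  fun v => hG v s

theorem outdeg_eq_sum_numEdges (src tgt : E → V) (v : V) :
    outdeg src v = ∑ w, numEdges src tgt v w := by
  simp only [outdeg, numEdges, ← filter_filter]
  exact card_eq_sum_card_fiberwise fun _ _ => mem_coe.2 (mem_univ _)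

variable {src tgt : E → V} {s : V}

-- With `K > deg⁺(v)` for all `v`, a weight growing by a factor `K` along one edge out of `v`
-- makes that edge alone outweigh `v`.
theorem IsGlobalSink.exists_outdeg_mul_lt_sum (hs : IsGlobalSink src tgt s) :
    ∃ g : V → ℕ, ∀ v ≠ s, outdeg src v * g v < ∑ w, numEdges src tgt v w * g w := by
  obtain ⟨ρ, hρ⟩ := exists_rank_of_reflTransGen hs
  set K := Fintype.card E + 1
  set L := univ.sup ρ
  refine ⟨fun v => K ^ (L - ρ v), fun v hv => ?_⟩
  obtain ⟨_, ⟨e, rfl, rfl⟩, hlt⟩ := hρ v hv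
  have hdeg : outdeg src (src e) < K := Nat.lt_succ_of_le (card_le_univ _)
  have hedge : 1 ≤ numEdges src tgt (src e) (tgt e) := card_pos.2 ⟨e, by simp⟩
  have hrank : L - ρ (src e) + 1 ≤ L - ρ (tgt e) := by
    have : ρ (src e) ≤ L := le_sup (mem_univ _)
    lia
  calc outdeg src (src e) * K ^ (L - ρ (src e))
      < K * K ^ (L - ρ (src e)) := by gcongr
    _ = K ^ (L - ρ (src e) + 1) := (pow_succ' _ _).symm
    _ ≤ K ^ (L - ρ (tgt e)) := Nat.pow_le_pow_right (Nat.succ_pos _) hrank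
    _ ≤ numEdges src tgt (src e) (tgt e) * K ^ (L - ρ (tgt e)) :=
      Nat.le_mul_of_pos_left _ hedge
    _ ≤ ∑ w, numEdges src tgt (src e) w * K ^ (L - ρ w) :=
      single_le_sum (f := fun w => numEdges src tgt (src e) w * K ^ (L - ρ w))
        (fun _ _ => Nat.zero_le _) (mem_univ _)

theorem IsGlobalSink.exists_sum_lt_outdeg_mul (hs : IsGlobalSink src tgt s) :
    ∃ f : V → ℕ, ∀ v ≠ s, ∑ w, numEdges src tgt v w * f w < outdeg src v * f v := by
  obtain ⟨g, hg⟩ := hs.exists_outdeg_mul_lt_sum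
  set M := univ.sup g
  have hM : ∀ v, M - g v + g v = M := fun v => Nat.sub_add_cancel (le_sup (mem_univ v))
  refine ⟨fun v => M - g v, fun v hv => ?_⟩
  have hsum : ∑ w, numEdges src tgt v w * (M - g w) + ∑ w, numEdges src tgt v w * g w
      = outdeg src v * (M - g v) + outdeg src v * g v := by
    simp only [← sum_add_distrib, ← mul_add, hM, ← sum_mul, ← outdeg_eq_sum_numEdges]
  have := hg v hv
  lia

theorem SFireStep.dotProduct_lt {c c' : {v : V // v ≠ s} → ℕ} {f : V → ℕ}
    (hf : ∀ v ≠ s, ∑ w, numEdges src tgt v w * f w < outdeg src v * f v)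
    (h : SFireStep src tgt s c c') :
    (c' ⬝ᵥ fun v => f v.1) < c ⬝ᵥ fun v => f v.1 := by
  obtain ⟨v, -, h⟩ := sFireStep_iff.1 h
  have hsent : sentChips src tgt s v.1 ⬝ᵥ (fun w => f w.1)
      ≤ ∑ w, numEdges src tgt v.1 w * f w := by
    simp only [dotProduct, sentChips]
    rw [← sum_subtype (univ.filter (· ≠ s)) (by simp) fun w => numEdges src tgt v.1 w * f w]
    exact sum_le_sum_of_subset (subset_univ _)
  have hpair := congrArg (· ⬝ᵥ fun w => f w.1) h
  simp only [add_dotProduct, single_dotProduct] at hpair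
  have := hf v.1 v.2
  lia

omit [Fintype V]
variable [Finite V]

theorem IsGlobalSink.wellFounded_flip_sFireStep (hs : IsGlobalSink src tgt s) :
    WellFounded (flip (SFireStep src tgt s)) := by
  have := Fintype.ofFinite V
  obtain ⟨f, hf⟩ := hs.exists_sum_lt_outdeg_mul
  exact Subrelation.wf (fun h => SFireStep.dotProduct_lt hf h)
    (measure fun c : {v : V // v ≠ s} → ℕ => c ⬝ᵥ fun v => f v.1).wf

theorem IsGlobalSink.exists_sReach_sStable (hs : IsGlobalSink src tgt s)
    (c : {v : V // v ≠ s} → ℕ) : ∃ a, SReach src tgt s c a ∧ SStable src s a := by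
  induction c using hs.wellFounded_flip_sFireStep.induction with | _ c ih
  by_cases hc : SStable src s c
  · exact ⟨c, .refl, hc⟩
  · obtain ⟨v, hv⟩ := not_forall.1 hc
    have hstep : SFireStep src tgt s c (sfire src tgt s c v) := ⟨v, not_lt.1 hv, rfl⟩
    obtain ⟨a, hreach, ha⟩ := ih _ hstep
    exact ⟨a, .head hstep hreach, ha⟩

theorem IsGlobalSink.stab_spec (hs : IsGlobalSink src tgt s) (c : {v : V // v ≠ s} → ℕ) :
    SReach src tgt s c (stab src tgt s c) ∧ SStable src s (stab src tgt s c) :=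
  Classical.epsilon_spec (hs.exists_sReach_sStable c)

theorem IsGlobalSink.finite_recS (hs : IsGlobalSink src tgt s) : Finite (RecS src tgt s) := by
  have := Fintype.ofFinite V
  refine (Set.finite_Iic fun v : {v : V // v ≠ s} => outdeg src v.1).subset fun c hc v => ?_
  obtain ⟨c₂, rfl⟩ := hc 0
  exact ((hs.stab_spec _).2 v).le

end Stabilization

section DLevel

omit [DecidableEq E]

theorem IsGlobalSink.isGreatest_dlvlClass {src tgt : E → V} {s : V}
    (hs : IsGlobalSink src tgt s) (x : RecSQuot src tgt s) :
    IsGreatest ((fun c : RecS src tgt s => dlvl src s c.1) ''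
      {c | Quotient.mk (recSSetoid src tgt s) c = x}) (dlvlClass src tgt s x) := by
  have := hs.finite_recS
  obtain ⟨c, rfl⟩ := Quotient.exists_rep x
  have hfin := Set.toFinite ((fun c : RecS src tgt s => dlvl src s c.1) ''
    {c' | Quotient.mk (recSSetoid src tgt s) c' = Quotient.mk _ c})
  exact ⟨Set.Nonempty.csSup_mem ⟨_, c, rfl, rfl⟩ hfin, fun _ => le_csSup hfin.bddAbove⟩

end DLevel

section QuotRem

/-- Division with remainder by `d` in every coordinate, as a bijection from pairs (quotient,
remainder) to functions. It splits configurations on `G^d` into a configuration on `G` and a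
remainder that never moves. -/
def quotRemEquiv (ι : Type*) (d : ℕ) [NeZero d] : (ι → ℕ) × (ι → Fin d) ≃ (ι → ℕ) :=
  (Equiv.arrowProdEquivProdArrow _ _ _).symm.trans
    (Equiv.piCongrRight fun _ => (Nat.divModEquiv d).symm)

variable {ι : Type*} {d : ℕ} [NeZero d]

theorem quotRemEquiv_apply (q : ι → ℕ) (r : ι → Fin d) :
    quotRemEquiv ι d (q, r) = d • q + fun v => (r v : ℕ) := by
  funext v
  simp [quotRemEquiv, Nat.divModEquiv, mul_comm, Equiv.arrowProdEquivProdArrow]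

theorem quotRemEquiv_add_smul (q q' : ι → ℕ) (r : ι → Fin d) :
    quotRemEquiv ι d (q + q', r) = quotRemEquiv ι d (q, r) + d • q' := by
  simp only [quotRemEquiv_apply, smul_add, add_right_comm]

end QuotRem

section EdgeMultiple

omit [DecidableEq E] in
/-- The digraph `(src', tgt')` has `d` times as many edges from `v` to `w` as `(src, tgt)`, for
all `v` and `w`, so that it is a copy of `G^d` when `(src, tgt)` is `G`. -/
def IsEdgeMultiple {E' : Type} [Fintype E'] (d : ℕ) (src tgt : E → V) (src' tgt' : E' → V) :
    Prop :=
  ∀ v w, numEdges src' tgt' v w = d * numEdges src tgt v w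

omit [Fintype V] [DecidableEq E] in
theorem isEdgeMultiple_parallelCopies (src tgt : E → V) (d : ℕ) :
    IsEdgeMultiple d src tgt (fun p : E × Fin d => src p.1) (fun p : E × Fin d => tgt p.1) := by
  intro v w
  have hfilter : (univ.filter fun p : E × Fin d => src p.1 = v ∧ tgt p.1 = w)
      = (univ.filter fun e => src e = v ∧ tgt e = w) ×ˢ univ := by
    ext
    simp
  simp only [numEdges, hfilter, card_product, card_fin, mul_comm]

namespace IsEdgeMultiple

omit [DecidableEq E]

variable {E' : Type} [Fintype E'] {d : ℕ} {src tgt : E → V} {src' tgt' : E' → V} {s : V}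

section

omit [Fintype V]

theorem outdeg_eq [Finite V] (h : IsEdgeMultiple d src tgt src' tgt') (v : V) :
    outdeg src' v = d * outdeg src v := by
  have := Fintype.ofFinite V
  simp only [outdeg_eq_sum_numEdges src' tgt', outdeg_eq_sum_numEdges src tgt, h v, mul_sum]

theorem sentChips_eq (h : IsEdgeMultiple d src tgt src' tgt') (v : V) :
    sentChips src' tgt' s v = d • sentChips src tgt s v :=
  funext fun w => h v w.1

theorem betaS_eq (h : IsEdgeMultiple d src tgt src' tgt') :
    betaS src' tgt' s = d • betaS src tgt s :=
  funext fun w => h s w.1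

variable [NeZero d] [Finite V]
variable (q q' : {v : V // v ≠ s} → ℕ) (r r' : {v : V // v ≠ s} → Fin d)

theorem sReach_quotRemEquiv (h : IsEdgeMultiple d src tgt src' tgt')
    {q q' : {v : V // v ≠ s} → ℕ} (hq : SReach src tgt s q q') :
    SReach src' tgt' s (quotRemEquiv _ d (q, r)) (quotRemEquiv _ d (q', r)) := by
  refine hq.lift (fun q => quotRemEquiv _ d (q, r)) fun a b hab => ?_
  obtain ⟨v, hv, hab⟩ := sFireStep_iff.1 hab
  refine sFireStep_iff.2 ⟨v, ?_, ?_⟩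
  · simp only [h.outdeg_eq, quotRemEquiv_apply]
    exact (Nat.mul_le_mul_left d hv).trans (Nat.le_add_right _ _)
  · rw [h.outdeg_eq, h.sentChips_eq, ← smul_eq_mul, Pi.single_smul, ← quotRemEquiv_add_smul,
      ← quotRemEquiv_add_smul, hab]

theorem sStable_quotRemEquiv (h : IsEdgeMultiple d src tgt src' tgt')
    {q : {v : V // v ≠ s} → ℕ} (hq : SStable src s q) :
    SStable src' s (quotRemEquiv _ d (q, r)) := by
  intro v
  rw [h.outdeg_eq, quotRemEquiv_apply]
  calc d * q v + r v < d * q v + d := Nat.add_lt_add_left (r v).2 _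
    _ = d * (q v + 1) := (Nat.mul_succ _ _).symm
    _ ≤ d * outdeg src v.1 := Nat.mul_le_mul_left d (hq v)

theorem stab_quotRemEquiv (h : IsEdgeMultiple d src tgt src' tgt') (hs : IsGlobalSink src tgt s) :
    stab src' tgt' s (quotRemEquiv _ d (q, r)) = quotRemEquiv _ d (stab src tgt s q, r) :=
  (h.sReach_quotRemEquiv r (hs.stab_spec q).1).stab_eq (h.sStable_quotRemEquiv r (hs.stab_spec q).2)

theorem sRecurrent_quotRemEquiv_iff (h : IsEdgeMultiple d src tgt src' tgt')
    (hs : IsGlobalSink src tgt s) :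
    SRecurrent src' tgt' s (quotRemEquiv _ d (q, r)) ↔ SRecurrent src tgt s q := by
  constructor
  · intro hrec q₁
    obtain ⟨c₂, hc₂⟩ := hrec (d • q₁)
    obtain ⟨⟨q₂, r₂⟩, rfl⟩ := (quotRemEquiv _ d).surjective c₂
    rw [add_comm, ← quotRemEquiv_add_smul, h.stab_quotRemEquiv _ _ hs, add_comm] at hc₂
    exact ⟨q₂, congrArg Prod.fst ((quotRemEquiv _ d).injective hc₂)⟩
  · intro hrec c₁
    obtain ⟨q₂, hq₂⟩ := hrec c₁
    have hle : c₁ ≤ quotRemEquiv _ d (c₁ + q₂, r) := by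
      intro v
      rw [quotRemEquiv_apply]
      calc c₁ v ≤ d * c₁ v := Nat.le_mul_of_pos_left _ (NeZero.pos d)
        _ ≤ d * (c₁ v + q₂ v) + r v := by lia
    obtain ⟨c₂, hc₂⟩ := exists_add_of_le hle
    exact ⟨c₂, by rw [← hc₂, h.stab_quotRemEquiv _ _ hs, hq₂]⟩

theorem sEquiv_quotRemEquiv_iff (h : IsEdgeMultiple d src tgt src' tgt')
    (hs : IsGlobalSink src tgt s) :
    SEquiv src' tgt' s (quotRemEquiv _ d (q, r)) (quotRemEquiv _ d (q', r')) ↔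
      SEquiv src tgt s q q' ∧ r = r' := by
  have hstab : ∀ k : ℕ,
      stab src' tgt' s (quotRemEquiv _ d (q, r) + k • betaS src' tgt' s)
      = quotRemEquiv _ d (stab src tgt s (q + k • betaS src tgt s), r) := by
    intro k
    rw [h.betaS_eq, smul_comm, ← quotRemEquiv_add_smul, h.stab_quotRemEquiv _ _ hs]
  simp only [SEquiv, hstab, EmbeddingLike.apply_eq_iff_eq, Prod.mk.injEq, exists_and_right]

/-- The bijection `Rec(G^d, s) ≃ Rec(G, s) × {0, …, d - 1}^(V ∖ {s})` given by division with
remainder. -/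
def recSEquiv (h : IsEdgeMultiple d src tgt src' tgt') (hs : IsGlobalSink src tgt s) :
    RecS src' tgt' s ≃ RecS src tgt s × ({v : V // v ≠ s} → Fin d) :=
  ((quotRemEquiv _ d).subtypeEquiv fun x =>
    (h.sRecurrent_quotRemEquiv_iff x.1 x.2 hs).symm).symm.trans
      Equiv.prodSubtypeFstEquivSubtypeProd

theorem recSSetoid_eq_comap (h : IsEdgeMultiple d src tgt src' tgt')
    (hs : IsGlobalSink src tgt s) :
    recSSetoid src' tgt' s = ((recSSetoid src tgt s).prod ⊥).comap (h.recSEquiv hs) := by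
  set e := h.recSEquiv hs
  have hgen : ∀ x y : RecS src tgt s × ({v : V // v ≠ s} → Fin d),
      SEquiv src' tgt' s (e.symm x).1 (e.symm y).1 ↔ SEquiv src tgt s x.1.1 y.1.1 ∧ x.2 = y.2 :=
    fun x y => h.sEquiv_quotRemEquiv_iff x.1.1 y.1.1 x.2 y.2 hs
  apply le_antisymm
  · refine Setoid.eqvGen_le fun c c' hcc' => ?_
    rw [← e.symm_apply_apply c, ← e.symm_apply_apply c', hgen] at hcc'
    exact ⟨.rel _ _ hcc'.1, hcc'.2⟩
  · have hquot : ∀ r, recSSetoid src tgt s ≤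
        (recSSetoid src' tgt' s).comap fun q => e.symm (q, r) := fun r =>
      Setoid.eqvGen_le fun q q' hqq' => .rel _ _ ((hgen (q, r) (q', r)).2 ⟨hqq', rfl⟩)
    intro c c' hcc'
    obtain ⟨⟨q, r⟩, rfl⟩ := e.symm.surjective c
    obtain ⟨⟨q', r'⟩, rfl⟩ := e.symm.surjective c'
    rw [Setoid.comap_rel, e.apply_symm_apply, e.apply_symm_apply] at hcc'
    obtain ⟨hqq', rfl : r = r'⟩ := hcc'
    exact hquot r hqq'

/-- The bijection on `~_s`-classes induced by `recSEquiv`: the remainder is an invariant of the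
class. -/
def recSQuotEquiv (h : IsEdgeMultiple d src tgt src' tgt') (hs : IsGlobalSink src tgt s) :
    RecSQuot src' tgt' s ≃ RecSQuot src tgt s × ({v : V // v ≠ s} → Fin d) :=
  (Quotient.congr (h.recSEquiv hs) fun _ _ => by rw [h.recSSetoid_eq_comap hs]; rfl).trans <|
    (Setoid.prodQuotientEquiv _ _).symm.trans <|
      (Equiv.refl _).prodCongr Setoid.quotientBotEquiv

theorem recSQuotEquiv_mk (h : IsEdgeMultiple d src tgt src' tgt') (hs : IsGlobalSink src tgt s)
    (c : RecS src' tgt' s) :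
    h.recSQuotEquiv hs (Quotient.mk _ c) =
      (Quotient.mk _ (h.recSEquiv hs c).1, (h.recSEquiv hs c).2) :=
  rfl

end

variable [NeZero d]

theorem dlvl_eq (h : IsEdgeMultiple d src tgt src' tgt') (hs : IsGlobalSink src tgt s)
    (c : RecS src' tgt' s) :
    dlvl src' s c.1 =
      d * dlvl src s (h.recSEquiv hs c).1.1 + ∑ v, ((h.recSEquiv hs c).2 v : ℕ) := by
  obtain ⟨⟨q, r⟩, rfl⟩ := (h.recSEquiv hs).symm.surjective c
  have hcoe : ((h.recSEquiv hs).symm (q, r)).1 = quotRemEquiv _ d (q.1, r) := rfl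
  simp only [dlvl, hcoe, quotRemEquiv_apply, Equiv.apply_symm_apply, h.outdeg_eq, Pi.add_apply,
    Pi.smul_apply, smul_eq_mul, sum_add_distrib, mul_add, mul_sum, add_assoc]

theorem dlvlClass_eq (h : IsEdgeMultiple d src tgt src' tgt') (hs : IsGlobalSink src tgt s)
    (x : RecSQuot src' tgt' s) :
    dlvlClass src' tgt' s x =
      d * dlvlClass src tgt s (h.recSQuotEquiv hs x).1 +
        ∑ v, ((h.recSQuotEquiv hs x).2 v : ℕ) := by
  set e := h.recSEquiv hs
  set y := h.recSQuotEquiv hs x with hy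
  have hmem : ∀ c, Quotient.mk _ c = x ↔ Quotient.mk _ (e c).1 = y.1 ∧ (e c).2 = y.2 := by
    intro c
    rw [hy, ← (h.recSQuotEquiv hs).apply_eq_iff_eq, h.recSQuotEquiv_mk, Prod.ext_iff]
  obtain ⟨⟨q, hq, hqmax⟩, hmax⟩ := hs.isGreatest_dlvlClass y.1
  refine IsGreatest.csSup_eq ⟨⟨e.symm (q, y.2), ?_, ?_⟩, ?_⟩
  · exact (hmem _).2 (by rw [e.apply_symm_apply]; exact ⟨hq, rfl⟩)
  · simp only [h.dlvl_eq hs, ← hqmax, e, Equiv.apply_symm_apply]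
  · rintro _ ⟨c, hc, rfl⟩
    obtain ⟨hquot, hrem⟩ := (hmem c).1 hc
    simp only [h.dlvl_eq hs]
    rw [← hrem]
    gcongr
    exact hmax ⟨_, hquot, rfl⟩

end IsEdgeMultiple

end EdgeMultiple

theorem sum_pow_sum_fin {R ι : Type*} [CommSemiring R] [Fintype ι] [DecidableEq ι] (y : R)
    (d : ℕ) : ∑ r : ι → Fin d, y ^ ∑ v, (r v : ℕ) = (∑ i ∈ range d, y ^ i) ^ Fintype.card ι := by
  simp only [← prod_pow_eq_pow_sum]
  rw [← Fin.sum_univ_eq_sum_range (y ^ ·), ← card_univ, ← prod_const, prod_univ_sum,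
    Fintype.piFinset_univ]

omit [DecidableEq E] in
theorem biggsMerino_parallel_copies_general {E' : Type} [Fintype E'] {src tgt : E → V}
    {src' tgt' : E' → V} {s : V} (hs : IsGlobalSink src tgt s) {d : ℕ} (hd : 1 ≤ d)
    (h : IsEdgeMultiple d src tgt src' tgt') :
    BM src' tgt' s = (BM src tgt s).comp ((X : Polynomial ℤ) ^ d) *
      (∑ i ∈ Finset.range d, (X : Polynomial ℤ) ^ i) ^ (Fintype.card V - 1) := by
  have : NeZero d := ⟨by lia⟩
  have := hs.finite_recS
  have := Fintype.ofFinite (RecSQuot src tgt s)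
  have hcard : Fintype.card V - 1 = Fintype.card {v : V // v ≠ s} := (Set.card_ne_eq s).symm
  calc BM src' tgt' s
      = ∑ᶠ x : RecSQuot src tgt s × ({v : V // v ≠ s} → Fin d),
          (X : Polynomial ℤ) ^ (d * dlvlClass src tgt s x.1 + ∑ v, (x.2 v : ℕ)) := by
        rw [← finsum_comp_equiv (h.recSQuotEquiv hs)]
        simp only [BM, h.dlvlClass_eq hs]
    _ = (∑ x, (X ^ d) ^ dlvlClass src tgt s x) *
          ∑ r : {v : V // v ≠ s} → Fin d, X ^ ∑ v, (r v : ℕ) := by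
        simp only [finsum_eq_sum_of_fintype, Fintype.sum_prod_type, pow_add, pow_mul, sum_mul_sum]
    _ = _ := by
        rw [sum_pow_sum_fin, hcard, BM, finsum_eq_sum_of_fintype, Polynomial.sum_comp]
        simp only [X_pow_comp]

/-- For `d ≥ 1`, the Biggs–Merino polynomial of the digraph `G^d`
obtained by replacing every edge of `G` by `d` parallel copies satisfies
`B(G^d,s;y) = B(G,s;y^d)·(1 + y + ⋯ + y^{d−1})^{|V|−1}`. -/
theorem biggsMerino_parallel_copies [Nonempty V] (src tgt : E → V)
    (hG : StronglyConnected src tgt) (s : V) (d : ℕ) (hd : 1 ≤ d) :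
    BM (fun p : E × Fin d => src p.1) (fun p : E × Fin d => tgt p.1) s =
      (BM src tgt s).comp ((X : Polynomial ℤ) ^ d) *
        (∑ i ∈ Finset.range d, (X : Polynomial ℤ) ^ i) ^ (Fintype.card V - 1) :=
  biggsMerino_parallel_copies_general (hG.isGlobalSink s) hd
    (isEdgeMultiple_parallelCopies src tgt d)

end SandpileBM
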